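/- arXiv:1611.07489 — 4 statements merged into one kernel-verified Lean document; each statement's English description precedes it below -/
import Mathlib

section
/- Weak duality between the Hajiaghayi–Jain dual and integral primal solutions: let (y,λ) be HJ-feasible, let b ≥ 0 be a real number, and let (F,R) be cut-feasible with |R| ≤ b. Then Σ_{S ⊆ V} y_S − b·λ ≤ Σ_{e ∈ F} c_e. -/
open Finset

namespace KForest1

variable {V : Type*}

/-- `S ⊙ i`: exactly one of the endpoints `a`, `b` lies in `S`. -/
def Separates [DecidableEq V] (a b : V) (S : Finset V) : Prop :=
  (a ∈ S ∧ b ∉ S) ∨ (a ∉ S ∧ b ∈ S)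

instance [DecidableEq V] (a b : V) (S : Finset V) : Decidable (Separates a b S) := by
  unfold Separates; infer_instance

/-- `e ∈ δ(S)`: the edge `e` has exactly one endpoint in `S`. -/
def InCut [DecidableEq V] (S : Finset V) (e : Sym2 V) : Prop :=
  ∃ u, u ∈ S ∧ ∃ v, v ∉ S ∧ e = s(u, v)

instance [Fintype V] [DecidableEq V] (S : Finset V) (e : Sym2 V) :
    Decidable (InCut S e) := by
  unfold InCut; infer_instance

/-- Weak duality between the Hajiaghayi–Jain dual and integral primal solutions:
if `(y, lam)` is HJ-feasible, `b ≥ 0`, and `(F, R)` is cut-feasible with `|R| ≤ b`,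
then `∑_S y_S - b·lam ≤ ∑_{e ∈ F} c_e`. -/
theorem weak_duality_HJ_dual
    {V : Type*} [Fintype V] [DecidableEq V]
    (E : Finset (Sym2 V)) (c : Sym2 V → ℝ) (hc : ∀ e ∈ E, 0 ≤ c e)
    (m : ℕ) (s t : Fin m → V)
    -- HJ-feasible dual solution
    (y : Finset V → ℝ) (lam : ℝ)
    (hy : ∀ S : Finset V, 0 ≤ y S) (hlam : 0 ≤ lam)
    (hedge : ∀ e ∈ E,
      ∑ S ∈ univ.filter (fun S : Finset V => InCut S e), y S ≤ c e)
    (hfam : ∀ 𝒮 : Finset (Finset V), ∑ S ∈ 𝒮, y S ≤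
      lam * (univ.filter (fun i : Fin m => ∃ S ∈ 𝒮, Separates (s i) (t i) S)).card)
    -- cut-feasible integral primal solution with removal budget `b`
    (b : ℝ) (hb : 0 ≤ b)
    (F : Finset (Sym2 V)) (R : Finset (Fin m)) (hF : F ⊆ E)
    (hR : (R.card : ℝ) ≤ b)
    (hcut : ∀ i ∉ R, ∀ S : Finset V, Separates (s i) (t i) S → ∃ e ∈ F, InCut S e) :
    (∑ S : Finset V, y S) - b * lam ≤ ∑ e ∈ F, c e := by
  classical
  have h1 : ∑ S ∈ univ.filter (fun S : Finset V => ¬ ∃ e ∈ F, InCut S e), y S ≤ b * lam := by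
    refine (hfam _).trans ?_
    rw [mul_comm b lam]
    refine mul_le_mul_of_nonneg_left (le_trans ?_ hR) hlam
    refine Nat.cast_le.mpr (Finset.card_le_card ?_)
    intro i hi
    obtain ⟨S, hS, hsep⟩ := (Finset.mem_filter.mp hi).2
    by_contra hiR
    exact (Finset.mem_filter.mp hS).2 (hcut i hiR S hsep)
  have h2 : ∑ S ∈ univ.filter (fun S : Finset V => ∃ e ∈ F, InCut S e), y S ≤ ∑ e ∈ F, c e := by
    refine le_trans ?_ (Finset.sum_le_sum fun e he => hedge e (hF he))
    simp only [Finset.sum_filter]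
    rw [Finset.sum_comm]
    refine Finset.sum_le_sum fun S _ => ?_
    have hnn : ∀ e ∈ F, 0 ≤ (if InCut S e then y S else 0) := by
      intro e _
      split_ifs
      · exact hy S
      · exact le_rfl
    split_ifs with h
    · obtain ⟨e, he, hce⟩ := h
      have := Finset.single_le_sum hnn he
      rwa [if_pos hce] at this
    · exact Finset.sum_nonneg hnn
  have h3 := Finset.sum_filter_add_sum_filter_not univ
    (fun S : Finset V => ∃ e ∈ F, InCut S e) y
  linarith

end KForest1
end

section
/- From a D-feasible solution of the per-demand dual one obtains an HJ-feasible solution of equal objective value: if (y,λ) is D-feasible, then the pair (ŷ,λ) defined by ŷ_S = Σ_{i : S ⊙ i} y_{i,S} for each S ⊆ V is HJ-feasible, and Σ_{S ⊆ V} ŷ_S = Σ_{(i,S) : S ⊙ i} y_{i,S}. -/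
open Finset

namespace KForest3

variable {V : Type*}

/-- `S ⊙ i`: exactly one of the endpoints `a`, `b` lies in `S`. -/
def Separates [DecidableEq V] (a b : V) (S : Finset V) : Prop :=
  (a ∈ S ∧ b ∉ S) ∨ (a ∉ S ∧ b ∈ S)

instance [DecidableEq V] (a b : V) (S : Finset V) : Decidable (Separates a b S) := by
  unfold Separates; infer_instance

/-- `e ∈ δ(S)`: the edge `e` has exactly one endpoint in `S`. -/
def InCut [DecidableEq V] (S : Finset V) (e : Sym2 V) : Prop :=
  ∃ u, u ∈ S ∧ ∃ v, v ∉ S ∧ e = s(u, v)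

instance [Fintype V] [DecidableEq V] (S : Finset V) (e : Sym2 V) :
    Decidable (InCut S e) := by
  unfold InCut; infer_instance

/-- The Hajiaghayi–Jain dual feasibility conditions for `(y, lam)`. -/
def HJFeasible [Fintype V] [DecidableEq V] (E : Finset (Sym2 V)) (c : Sym2 V → ℝ)
    (m : ℕ) (s t : Fin m → V) (y : Finset V → ℝ) (lam : ℝ) : Prop :=
  (∀ S : Finset V, 0 ≤ y S) ∧ 0 ≤ lam ∧
    (∀ e ∈ E, ∑ S ∈ univ.filter (fun S : Finset V => InCut S e), y S ≤ c e) ∧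
    (∀ 𝒮 : Finset (Finset V), ∑ S ∈ 𝒮, y S ≤
      lam * (univ.filter (fun i : Fin m => ∃ S ∈ 𝒮, Separates (s i) (t i) S)).card)

/-- From a D-feasible per-demand dual solution `(y, lam)` one obtains an HJ-feasible
solution `(ŷ, lam)` with `ŷ_S = ∑_{i : S ⊙ i} y_{i,S}`, of equal objective value. -/
theorem D_feasible_to_HJ_feasible
    {V : Type*} [Fintype V] [DecidableEq V]
    (E : Finset (Sym2 V)) (c : Sym2 V → ℝ) (hc : ∀ e ∈ E, 0 ≤ c e)
    (m : ℕ) (s t : Fin m → V)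
    -- D-feasible dual solution
    (y : Fin m → Finset V → ℝ) (lam : ℝ) (hlam : 0 ≤ lam)
    (hy : ∀ (i : Fin m) (S : Finset V), Separates (s i) (t i) S → 0 ≤ y i S)
    (hdual_edge : ∀ e ∈ E,
      ∑ i : Fin m, ∑ S ∈ univ.filter (fun S : Finset V =>
        InCut S e ∧ Separates (s i) (t i) S), y i S ≤ c e)
    (hdual_dem : ∀ i : Fin m,
      ∑ S ∈ univ.filter (fun S : Finset V => Separates (s i) (t i) S), y i S ≤ lam) :
    HJFeasible E c m s t
      (fun S => ∑ i ∈ univ.filter (fun i : Fin m => Separates (s i) (t i) S), y i S) lam ∧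
    (∑ S : Finset V,
        ∑ i ∈ univ.filter (fun i : Fin m => Separates (s i) (t i) S), y i S)
      = ∑ i : Fin m,
          ∑ S ∈ univ.filter (fun S : Finset V => Separates (s i) (t i) S), y i S := by
  have key : ∀ A : Finset (Finset V),
      ∑ S ∈ A, ∑ i ∈ univ.filter (fun i : Fin m => Separates (s i) (t i) S), y i S
        = ∑ i : Fin m, ∑ S ∈ A.filter (fun S => Separates (s i) (t i) S), y i S := by
    intro A
    simp only [Finset.sum_filter]
    exact Finset.sum_comm
  refine ⟨⟨?_, hlam, ?_, ?_⟩, key univ⟩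
  · intro S
    refine Finset.sum_nonneg fun i hi => hy i S ?_
    simpa using hi
  · intro e he
    have h := hdual_edge e he
    rw [key]
    simpa only [Finset.filter_filter] using h
  · intro A
    rw [key, mul_comm, ← nsmul_eq_mul, ← Finset.sum_const, Finset.sum_filter]
    refine Finset.sum_le_sum fun i _ => ?_
    split_ifs with h
    · refine le_trans (Finset.sum_le_sum_of_subset_of_nonneg ?_ ?_) (hdual_dem i)
      · exact Finset.filter_subset_filter _ (Finset.subset_univ A)
      · intro S hS _
        exact hy i S (by simpa using hS)
    · refine le_of_eq (Finset.sum_eq_zero fun S hS => ?_)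
      rw [Finset.mem_filter] at hS
      exact absurd ⟨S, hS.1, hS.2⟩ h

end KForest3
end

section
/- Algebraic core of Lemma 4 (convex-combination dual bound): let ε ∈ (0,1] and m ≥ 1 be real numbers, and let OPT ≥ 0, λ₁ ≤ λ₂ with λ₁ ≥ 0 and λ₂ − λ₁ ≤ OPT/m², α₁, α₂ ≥ 0 with α₁ + α₂ = 1, and set λ* = α₁λ₁ + α₂λ₂. Let r₁, r₂ be reals with 0 ≤ r₁ ≤ m and r₂ ≥ 0, and let Y₁, Y₂, C₁, C₂ be reals with Y₁ ≥ r₁λ₁, Y₂ ≥ r₂λ₂, C₁ ≤ 2Y₁, C₂ ≤ 2Y₂. If OPT ≥ α₁·(Y₁ − (1−ε)·r₁·λ*) + α₂·(Y₂ − (1−ε)·r₂·λ*), then α₁·C₁ + α₂·C₂ ≤ (4/ε)·OPT. -/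
/-- Algebraic core of Lemma 4 (convex-combination dual bound): from the
weak-duality bound for the convex combination `(y*, λ*) = α₁(y(λ₁),λ₁) + α₂(y(λ₂),λ₂)`
of the two HJ dual solutions produced at the final penalties of the binary search,
one gets `α₁·C₁ + α₂·C₂ ≤ (4/ε)·OPT`. -/
theorem kforest_convex_dual_bound
    (ε m OPT lam₁ lam₂ α₁ α₂ r₁ r₂ Y₁ Y₂ C₁ C₂ : ℝ)
    (hε0 : 0 < ε) (hε1 : ε ≤ 1) (hm : 1 ≤ m) (hOPT : 0 ≤ OPT)
    (hlam : lam₁ ≤ lam₂) (hlam₁ : 0 ≤ lam₁) (hgap : lam₂ - lam₁ ≤ OPT / m ^ 2)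
    (hα₁ : 0 ≤ α₁) (hα₂ : 0 ≤ α₂) (hsum : α₁ + α₂ = 1)
    (hr₁0 : 0 ≤ r₁) (hr₁m : r₁ ≤ m) (hr₂0 : 0 ≤ r₂)
    (hY₁ : r₁ * lam₁ ≤ Y₁) (hY₂ : r₂ * lam₂ ≤ Y₂)
    (hC₁ : C₁ ≤ 2 * Y₁) (hC₂ : C₂ ≤ 2 * Y₂)
    (hdual : α₁ * (Y₁ - (1 - ε) * r₁ * (α₁ * lam₁ + α₂ * lam₂))
           + α₂ * (Y₂ - (1 - ε) * r₂ * (α₁ * lam₁ + α₂ * lam₂)) ≤ OPT) :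
    α₁ * C₁ + α₂ * C₂ ≤ (4 / ε) * OPT := by
  have hL2 : α₁ * lam₁ + α₂ * lam₂ ≤ lam₂ := by
    have : α₁ = 1 - α₂ := by linarith
    subst this
    nlinarith [mul_nonneg hα₁ (sub_nonneg.2 hlam)]
  have hm2 : 0 < m ^ 2 := by positivity
  have hgap' : (lam₂ - lam₁) * m ^ 2 ≤ OPT := (le_div_iff₀ hm2).1 hgap
  have hd : 0 ≤ lam₂ - lam₁ := sub_nonneg.2 hlam
  have hrm : r₁ ≤ m ^ 2 := by nlinarith
  have hrd : r₁ * (lam₂ - lam₁) ≤ OPT := by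
    have := mul_le_mul_of_nonneg_left hrm hd
    linarith
  generalize α₁ * lam₁ + α₂ * lam₂ = L at *
  have h1 : r₁ * L ≤ Y₁ + OPT := by
    have := mul_le_mul_of_nonneg_left hL2 hr₁0
    linarith
  have h2 : r₂ * L ≤ Y₂ := by
    have := mul_le_mul_of_nonneg_left hL2 hr₂0
    linarith
  have he : 0 ≤ 1 - ε := by linarith
  have k1 := mul_le_mul_of_nonneg_left h1 (mul_nonneg hα₁ he)
  have k2 := mul_le_mul_of_nonneg_left h2 (mul_nonneg hα₂ he)
  have k3 : α₁ * (1 - ε) * OPT ≤ OPT := by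
    have : α₁ * (1 - ε) ≤ 1 := by nlinarith
    nlinarith
  have key : ε * (α₁ * Y₁ + α₂ * Y₂) ≤ 2 * OPT := by linarith
  have c1 := mul_le_mul_of_nonneg_left hC₁ hα₁
  have c2 := mul_le_mul_of_nonneg_left hC₂ hα₂
  have c3 : α₁ * C₁ + α₂ * C₂ ≤ 2 * (α₁ * Y₁ + α₂ * Y₂) := by linarith
  rw [div_mul_eq_mul_div, le_div_iff₀ hε0]
  have := mul_le_mul_of_nonneg_right c3 hε0.le
  linarith
end

section
/- Correctness of the case analysis in Step 3 of the algorithm: let ε be a real with 0 < ε ≤ 1/2, M > 0 a real, r = (1−ε)·M, and let r₁, r₂ be reals with 0 ≤ r₂ < r < r₁. Define α₁ = (r − r₂)/(r₁ − r₂) and α₂ = (r₁ − r)/(r₁ − r₂). Let OPT ≥ 0 and C₁, C₂ ≥ 0 be reals with α₁·C₁ + α₂·C₂ ≤ (4/ε)·OPT. Then: (i) if α₂ ≥ ε, then C₂ ≤ (4/ε²)·OPT and r₂ ≤ M; (ii) if α₂ < ε, then C₁ ≤ (4/ε²)·OPT and r₁ ≤ M. -/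
/-- Correctness of the case analysis in Step 3 of the `k`-forest algorithm:
depending on whether `α₂ ≥ ε` or not, the returned solution removes at most
`M` demands and has cost at most `(4/ε²)·OPT`. -/
theorem kforest_step3_case_analysis
    (ε M r r₁ r₂ OPT C₁ C₂ : ℝ)
    (hε0 : 0 < ε) (hε1 : ε ≤ 1 / 2) (hM : 0 < M) (hr : r = (1 - ε) * M)
    (hr₂0 : 0 ≤ r₂) (h₂ : r₂ < r) (h₁ : r < r₁)
    (hOPT : 0 ≤ OPT) (hC₁ : 0 ≤ C₁) (hC₂ : 0 ≤ C₂)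
    (hbound : ((r - r₂) / (r₁ - r₂)) * C₁ + ((r₁ - r) / (r₁ - r₂)) * C₂
      ≤ (4 / ε) * OPT) :
    (ε ≤ (r₁ - r) / (r₁ - r₂) → C₂ ≤ (4 / ε ^ 2) * OPT ∧ r₂ ≤ M) ∧
    ((r₁ - r) / (r₁ - r₂) < ε → C₁ ≤ (4 / ε ^ 2) * OPT ∧ r₁ ≤ M) := by
  have hd : 0 < r₁ - r₂ := by linarith
  have hsum : (r - r₂) / (r₁ - r₂) + (r₁ - r) / (r₁ - r₂) = 1 := by
    rw [← add_div, div_eq_one_iff_eq hd.ne']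
    ring
  have ha1 : 0 ≤ (r - r₂) / (r₁ - r₂) := div_nonneg (by linarith) hd.le
  have ha2 : 0 ≤ (r₁ - r) / (r₁ - r₂) := div_nonneg (by linarith) hd.le
  have key : ∀ C : ℝ, ε * C ≤ (4 / ε) * OPT → C ≤ (4 / ε ^ 2) * OPT := by
    intro C h
    have e : (4 / ε ^ 2) * OPT = ((4 / ε) * OPT) / ε := by
      field_simp
    rw [e, le_div_iff₀ hε0]
    linarith
  have hm1 := mul_nonneg ha1 hC₁
  have hm2 := mul_nonneg ha2 hC₂
  refine ⟨fun h => ⟨key _ ?_, ?_⟩, fun h => ⟨key _ ?_, ?_⟩⟩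
  · have := mul_le_mul_of_nonneg_right h hC₂
    linarith
  · nlinarith [mul_pos hε0 hM]
  · have h' : ε ≤ (r - r₂) / (r₁ - r₂) := by linarith
    have := mul_le_mul_of_nonneg_right h' hC₁
    linarith
  · rw [div_lt_iff₀ hd] at h
    have h3 : (1 - ε) * r₁ ≤ (1 - ε) * M := by
      nlinarith [mul_nonneg hε0.le hr₂0]
    exact le_of_mul_le_mul_left h3 (by linarith)
end
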